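/- Let S = {(x₁,1), (x₂,−1)} ⊆ ℝ^d × {−1,+1} with d(x₁,x₂) = 2γ*, and let S' = {(x_i + z_i^{(j)}, y_i) : i ∈ {1,2}, j ∈ [N]} where the z_i^{(j)} are i.i.d. uniform on the sphere of radius r in ℝ^d. If N ≥ 16d and r ≥ (8e²√(2d)/π^{3/2})·γ*, then the probability that R_∞(S ∪ S') = ∅ is at least 1 − 2e^{−d/6}. -/

import Mathlib

open scoped RealInnerProductSpace ENNReal Classical
open Metric Set MeasureTheory

noncomputable section

/-- `ℝ^d` with the Euclidean (ℓ²) structure. -/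
abbrev Euc (d : ℕ) := EuclideanSpace ℝ (Fin d)

/-- `X₊`: the set of points of `T` with label `1`. -/
def posPts {d : ℕ} (T : Set (Euc d × ℝ)) : Set (Euc d) := {x | (x, (1 : ℝ)) ∈ T}

/-- `X₋`: the set of points of `T` with label `-1`. -/
def negPts {d : ℕ} (T : Set (Euc d × ℝ)) : Set (Euc d) := {x | (x, (-1 : ℝ)) ∈ T}

/-- All labels in `T` are `±1`, i.e. `T ⊆ ℝ^d × {-1, +1}`. -/
def LabelsPM {d : ℕ} (T : Set (Euc d × ℝ)) : Prop := ∀ p ∈ T, p.2 = 1 ∨ p.2 = -1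

/-- `(w, b)` is a linear separator of the labeled set `T`:
`w ≠ 0` and `y(⟨w,x⟩ + b) ≥ 0` for all `(x,y) ∈ T`. -/
def IsLinSep {d : ℕ} (w : Euc d) (b : ℝ) (T : Set (Euc d × ℝ)) : Prop :=
  w ≠ 0 ∧ ∀ p ∈ T, p.2 * (⟪w, p.1⟫ + b) ≥ 0

/-- The hyperplane `H = {x | ⟨w,x⟩ + b = 0}` associated with `(w, b)`. -/
def hyperplane {d : ℕ} (w : Euc d) (b : ℝ) : Set (Euc d) := {x | ⟪w, x⟫ + b = 0}

/-- The margin `γ_{(w,b)}(S)`: infimum over `(x,y) ∈ S` of the distance from `x`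
to the hyperplane of `(w,b)`. -/
def linMargin {d : ℕ} (S : Set (Euc d × ℝ)) (w : Euc d) (b : ℝ) : ℝ :=
  ⨅ p : S, Metric.infDist (p : Euc d × ℝ).1 (hyperplane w b)

/-- `γ` is the max-margin of `S`: attained by some linear separator of `S`, and an upper
bound on the margin of every linear separator of `S`. -/
def IsMaxMargin {d : ℕ} (S : Set (Euc d × ℝ)) (γ : ℝ) : Prop :=
  (∃ w b, IsLinSep w b S ∧ linMargin S w b = γ) ∧
    ∀ w b, IsLinSep w b S → linMargin S w b ≤ γ

/-- The worst-case margin `α(S,S')` (an extended real): the infimum over all linear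
separators of `S ∪ S'` of their margin on `S`, or `-∞` if no separator exists. -/
def alpha {d : ℕ} (S S' : Set (Euc d × ℝ)) : EReal :=
  if ∃ w b, IsLinSep w b (S ∪ S') then
    sInf {m : EReal | ∃ w b, IsLinSep w b (S ∪ S') ∧ m = ((linMargin S w b : ℝ) : EReal)}
  else ⊥

/-- `S_r`: the set of labeled points obtained by moving a point of `S` by distance at
most `r`, keeping its label; i.e. `((X₊)_r × {1}) ∪ ((X₋)_r × {-1})`. -/
def ballAug {d : ℕ} (S : Set (Euc d × ℝ)) (r : ℝ) : Set (Euc d × ℝ) :=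
  {p | (p.2 = 1 ∧ Metric.infDist p.1 (posPts S) ≤ r) ∨
       (p.2 = -1 ∧ Metric.infDist p.1 (negPts S) ≤ r)}

/-- A `{±1}`-valued classifier. -/
def IsClassifier {d : ℕ} (f : Euc d → ℝ) : Prop := ∀ x, f x = 1 ∨ f x = -1

/-- `f` separates the labeled set `T`: `f x = y` for all `(x,y) ∈ T`. -/
def Separates {d : ℕ} (f : Euc d → ℝ) (T : Set (Euc d × ℝ)) : Prop :=
  ∀ p ∈ T, f p.1 = p.2

/-- The circumradius of `A`: the radius of the smallest closed ball containing `A`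
(as an extended nonnegative real). -/
def circumradius {d : ℕ} (A : Set (Euc d)) : ℝ≥0∞ :=
  ⨅ c : Euc d, ⨆ x ∈ A, edist c x

/-- `f` is `ε`-respectful of `T`: `f = 1` on the convex hull of any subset of `X₊(T)` of
circumradius at most `ε`, and `f = -1` on the convex hull of any subset of `X₋(T)` of
circumradius at most `ε`. (Taking `ε = ⊤` gives respectful classifiers.) -/
def RespectfulOf {d : ℕ} (ε : ℝ≥0∞) (f : Euc d → ℝ) (T : Set (Euc d × ℝ)) : Prop :=
  (∀ A ⊆ posPts T, circumradius A ≤ ε → ∀ x ∈ convexHull ℝ A, f x = 1) ∧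
  (∀ B ⊆ negPts T, circumradius B ≤ ε → ∀ x ∈ convexHull ℝ B, f x = -1)

/-- `R_ε(T)`, the set of `ε`-respectful classifiers of `T`. -/
def respectfulSet {d : ℕ} (ε : ℝ≥0∞) (T : Set (Euc d × ℝ)) : Set (Euc d → ℝ) :=
  {f | IsClassifier f ∧ RespectfulOf ε f T}

/-- The margin `γ_f(S)` of a classifier `f` on `S`:
`min_{(x,y) ∈ S} d(x, f⁻¹(-y))`. -/
def clsMargin {d : ℕ} (f : Euc d → ℝ) (S : Set (Euc d × ℝ)) : ℝ :=
  ⨅ p : S, Metric.infDist (p : Euc d × ℝ).1 (f ⁻¹' {-(p : Euc d × ℝ).2})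

/-- `γ_f(S,S')`: the margin of `f` on `S` if `f` separates `S ∪ S'`, and `-∞` otherwise. -/
def clsMarginAug {d : ℕ} (f : Euc d → ℝ) (S S' : Set (Euc d × ℝ)) : EReal :=
  if Separates f (S ∪ S') then ((clsMargin f S : ℝ) : EReal) else ⊥

/-- The distance `d(P, Q) = inf {d(a,b) | a ∈ P, b ∈ Q}` between two sets,
as an extended nonnegative real. -/
def setSepDist {d : ℕ} (P Q : Set (Euc d)) : ℝ≥0∞ :=
  ⨅ a ∈ P, EMetric.infEdist a Q

/-- The uniform (rotation-invariant) probability measure on the sphere of radius `r`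
centered at the origin in `ℝ^d`, obtained by normalizing the surface measure induced by
Lebesgue measure on the unit sphere and pushing forward by scaling by `r`. -/
def uniformSphere (d : ℕ) (r : ℝ) : Measure (Euc d) :=
  (((volume : Measure (Euc d)).toSphere) Set.univ)⁻¹ •
    ((((volume : Measure (Euc d)).toSphere).map (Subtype.val)).map (fun x => r • x))

end


open scoped Pointwise

lemma slab_vol {d : ℕ} (hd : 0 < d) (e : Euc d) (he : ‖e‖ = 1) (t : ℝ) 
    (ht2 : 18 * d * t ^ 2 ≤ 1) :
    2 * volume {x : Euc d | x ∈ ball (0 : Euc d) 1 ∧ |⟪e, x⟫| ≤ t} ≤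
      volume (ball (0 : Euc d) 1) := by
  have hd1 : (1 : ℝ) ≤ d := by exact_mod_cast hd
  have hd0 : (0 : ℝ) < d := by linarith
  set q : ℝ := 1 - 1 / (2 * d) with hq
  have hq0 : 0 < q := by
    rw [hq, sub_pos, div_lt_one (by positivity)]; linarith
  have hq1 : q ≤ 1 := by
    have : 0 ≤ 1 / (2 * (d : ℝ)) := by positivity
    linarith
  set c : ℝ := Real.sqrt q with hc
  have hc0 : 0 < c := Real.sqrt_pos.2 hq0
  have hc2 : c ^ 2 = q := Real.sq_sqrt hq0.le
  have hc1 : c ≤ 1 := by nlinarith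
  let T : Euc d →ₗ[ℝ] Euc d :=
    c • LinearMap.transvection ((innerₛₗ ℝ) e) ((3 / c - 1) • e)
  have hTx : ∀ x, T x = c • x + ((3 - c) * ⟪e, x⟫) • e := by
    intro x
    simp only [T, LinearMap.smul_apply, LinearMap.transvection.apply, innerₛₗ_apply_apply, smul_add,
      smul_smul]
    congr 2
    field_simp
  have hee : ⟪e, e⟫ = 1 := by rw [real_inner_self_eq_norm_sq, he]; norm_num
  have hdet : LinearMap.det T = 3 * c ^ (d - 1) := by
    simp only [T, LinearMap.det_smul, LinearMap.transvection.det, finrank_euclideanSpace,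
      Fintype.card_fin, innerₛₗ_apply_apply, inner_smul_right, hee]
    obtain ⟨k, rfl⟩ : ∃ k, d = k + 1 := ⟨d - 1, by omega⟩
    simp only [add_tsub_cancel_right, pow_succ]
    field_simp
    ring
  have hdet2 : 2 ≤ LinearMap.det T := by
    rw [hdet]
    have h1 : c ^ d ≤ c ^ (d - 1) := pow_le_pow_of_le_one hc0.le hc1 (by omega)
    have h2 : 1 / 2 ≤ (c ^ d) ^ 2 := by
      rw [← pow_mul, mul_comm, pow_mul, hc2]
      have := one_add_mul_le_pow (a := -(1 / (2 * (d : ℝ)))) (by linarith) d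
      have h3 : 1 + (d : ℝ) * -(1 / (2 * (d : ℝ))) = 1 / 2 := by field_simp; norm_num
      rw [h3] at this
      rw [hq, sub_eq_add_neg]; exact this
    have h3 : 0 < c ^ d := by positivity
    have h4 : 2 / 3 ≤ c ^ d := by nlinarith
    linarith
  have hsub : T '' {x : Euc d | x ∈ ball (0 : Euc d) 1 ∧ |⟪e, x⟫| ≤ t} ⊆ ball (0 : Euc d) 1 := by
    rintro _ ⟨x, ⟨hx, hxt⟩, rfl⟩
    rw [mem_ball_zero_iff] at hx ⊢
    have h1 : ‖T x‖ ^ 2 = c ^ 2 * ‖x‖ ^ 2 + (9 - c ^ 2) * ⟪e, x⟫ ^ 2 := by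
      rw [hTx, norm_add_sq_real, norm_smul, norm_smul, he, inner_smul_left, inner_smul_right,
        real_inner_comm]
      simp only [mul_pow, Real.norm_eq_abs, sq_abs, RCLike.conj_to_real]
      ring
    have h2 : ⟪e, x⟫ ^ 2 ≤ t ^ 2 := by
      rw [← sq_abs]; exact pow_le_pow_left₀ (abs_nonneg _) hxt 2
    have h3 : ‖x‖ ^ 2 < 1 := by nlinarith [norm_nonneg x]
    have h4 : 9 * t ^ 2 ≤ 1 / (2 * d) := by
      rw [le_div_iff₀ (by positivity)]; linarith
    have h5 : ‖T x‖ ^ 2 < 1 := by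
      rw [h1, hc2]
      nlinarith [sq_nonneg ⟪e, x⟫]
    nlinarith [norm_nonneg (T x)]
  have := measure_mono (μ := (volume : Measure (Euc d))) hsub
  rw [Measure.addHaar_image_linearMap] at this
  refine le_trans ?_ this
  gcongr
  have h2 := ENNReal.ofReal_le_ofReal (hdet2.trans (le_abs_self _))
  rwa [ENNReal.ofReal_ofNat] at h2

lemma cone_vol {d : ℕ} (hd : 0 < d) (w : Euc d) (hw : 18 * d ≤ ‖w‖ ^ 2) :
    volume {x : Euc d | x ∈ ball (0 : Euc d) 1 ∧ ⟪w, x⟫ ≤ ‖x‖} ≤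
      ENNReal.ofReal (3 / 4) * volume (ball (0 : Euc d) 1) := by
  have hd1 : (1 : ℝ) ≤ d := by exact_mod_cast hd
  have hw0 : 0 < ‖w‖ := by
    rcases (norm_nonneg w).eq_or_lt with h | h
    · rw [← h] at hw; nlinarith
    · exact h
  set A : Set (Euc d) := {x | x ∈ ball (0 : Euc d) 1 ∧ |⟪‖w‖⁻¹ • w, x⟫| ≤ ‖w‖⁻¹} with hA
  set D : Set (Euc d) := {x | x ∈ ball (0 : Euc d) 1 ∧ ‖x‖ < ⟪w, x⟫} with hD
  set C : Set (Euc d) := {x | x ∈ ball (0 : Euc d) 1 ∧ ⟪w, x⟫ ≤ ‖x‖} with hC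
  have hslab : 2 * volume A ≤ volume (ball (0 : Euc d) 1) := by
    apply slab_vol hd
    · rw [norm_smul, norm_inv, norm_norm]; field_simp
    · rw [inv_pow, ← div_eq_mul_inv, div_le_one (by positivity)]; exact hw
  have hDm : MeasurableSet D := by
    apply MeasurableSet.inter measurableSet_ball
    exact measurableSet_lt (f := fun x : Euc d => ‖x‖) (g := fun x : Euc d => ⟪w, x⟫)
      (by fun_prop) (by fun_prop)
  have hneg : volume (-D) = volume D := Measure.measure_neg _ _
  have hCsub : C ⊆ A ∪ -D := by
    rintro x ⟨hx, hx2⟩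
    by_cases h : ‖x‖ < ⟪w, -x⟫
    · right
      exact ⟨by simpa using hx, by simpa using h⟩
    · left
      refine ⟨hx, ?_⟩
      rw [mem_ball_zero_iff] at hx
      rw [inner_neg_right] at h
      rw [inner_smul_left, RCLike.conj_to_real, abs_mul, abs_of_pos (inv_pos.2 hw0)]
      have : |⟪w, x⟫| ≤ 1 := abs_le.2 ⟨by linarith, by linarith⟩
      have := mul_le_mul_of_nonneg_left this (inv_pos.2 hw0).le
      simpa using this
  have hball : volume (ball (0 : Euc d) 1) = volume C + volume D := by
    rw [← measure_union _ hDm]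
    · congr 1
      ext x
      simp only [hC, hD, mem_union, mem_ofPred_eq]
      constructor
      · intro h
        rcases le_or_gt ⟪w, x⟫ ‖x‖ with h' | h'
        · exact Or.inl ⟨h, h'⟩
        · exact Or.inr ⟨h, h'⟩
      · rintro (h | h) <;> exact h.1
    · rw [Set.disjoint_left]
      rintro x ⟨_, h⟩ ⟨_, h'⟩
      linarith
  have hCle : volume C ≤ volume A + volume D := by
    rw [← hneg]; exact (measure_mono hCsub).trans (measure_union_le _ _)
  have hfin : volume (ball (0 : Euc d) 1) ≠ ⊤ := measure_ball_lt_top.ne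
  have hCf : volume C ≠ ⊤ := ne_top_of_le_ne_top hfin (measure_mono fun x h => h.1)
  have hDf : volume D ≠ ⊤ := ne_top_of_le_ne_top hfin (measure_mono fun x h => h.1)
  have hAf : volume A ≠ ⊤ := ne_top_of_le_ne_top hfin (measure_mono fun x h => h.1)
  generalize volume (ball (0 : Euc d) 1) = b at *
  generalize volume A = a at *
  generalize volume C = c at *
  generalize volume D = f at *
  lift b to NNReal using hfin
  lift a to NNReal using hAf
  lift c to NNReal using hCf
  lift f to NNReal using hDf
  have e1 : (b : ℝ) = c + f := by exact_mod_cast hball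
  have e2 : (c : ℝ) ≤ a + f := by exact_mod_cast hCle
  have e3 : 2 * (a : ℝ) ≤ b := by exact_mod_cast hslab
  rw [← ENNReal.ofReal_coe_nnreal, ← ENNReal.ofReal_coe_nnreal (p := b),
    ← ENNReal.ofReal_mul (by norm_num)]
  apply ENNReal.ofReal_le_ofReal
  linarith

lemma uniformSphere_prob {d : ℕ} (hd : 0 < d) (r : ℝ) :
    IsProbabilityMeasure (uniformSphere d r) := by
  constructor
  have : Nonempty (Fin d) := ⟨⟨0, hd⟩⟩
  rw [uniformSphere, Measure.smul_apply, Measure.map_apply (by fun_prop) .univ,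
    Measure.map_apply (by fun_prop) (by simp)]
  simp only [preimage_univ, smul_eq_mul]
  apply ENNReal.inv_mul_cancel
  · rw [Measure.toSphere_apply_univ]
    simp only [finrank_euclideanSpace, Fintype.card_fin, ne_eq, mul_eq_zero, Nat.cast_eq_zero, not_or]
    exact ⟨hd.ne', (measure_ball_pos _ _ one_pos).ne'⟩
  · exact measure_ne_top _ _

lemma uniformSphere_half {d : ℕ} (hd : 0 < d) (r : ℝ) (hr : 0 < r) (w : Euc d)
    (hw : 18 * d ≤ (r * ‖w‖) ^ 2) :
    uniformSphere d r {z | ⟪w, z⟫ ≤ 1} ≤ ENNReal.ofReal (3 / 4) := by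
  have : Nonempty (Fin d) := ⟨⟨0, hd⟩⟩
  have hm : MeasurableSet {z : Euc d | ⟪w, z⟫ ≤ 1} :=
    measurableSet_le (by fun_prop) (by fun_prop)
  have hm1 : Measurable (fun x : Euc d => r • x) := by fun_prop
  rw [uniformSphere, Measure.smul_apply, Measure.map_apply hm1 hm,
    Measure.map_apply (by fun_prop) (hm1 hm), 
    Measure.toSphere_apply' _ (measurable_subtype_coe (hm1 hm)), Measure.toSphere_apply_univ]
  have hsub : Ioo (0 : ℝ) 1 • ((↑) '' ((↑) ⁻¹' ((fun x : Euc d => r • x) ⁻¹' {z | ⟪w, z⟫ ≤ 1}) : Set (sphere (0 : Euc d) 1)) : Set (Euc d)) ⊆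
      {x : Euc d | x ∈ ball (0 : Euc d) 1 ∧ ⟪r • w, x⟫ ≤ ‖x‖} := by
    rintro _ ⟨s, hs, _, ⟨u, hu, rfl⟩, rfl⟩
    have hu1 : ‖(u : Euc d)‖ = 1 := by simpa using u.2
    simp only [mem_preimage, mem_ofPred_eq, inner_smul_right] at hu
    simp only [mem_ofPred_eq, mem_ball_zero_iff, norm_smul, hu1, Real.norm_eq_abs, abs_of_pos hs.1,
      inner_smul_left, inner_smul_right, RCLike.conj_to_real, mul_one]
    refine ⟨hs.2, ?_⟩
    have := mul_le_mul_of_nonneg_left hu hs.1.le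
    linarith
  have h1 := cone_vol hd (r • w) (by rwa [norm_smul, Real.norm_eq_abs, abs_of_pos hr])
  have h2 := (measure_mono (μ := (volume : Measure (Euc d))) hsub).trans h1
  have hb0 : volume (ball (0 : Euc d) 1) ≠ 0 := (measure_ball_pos _ _ one_pos).ne'
  have hbt : volume (ball (0 : Euc d) 1) ≠ ⊤ := measure_ball_lt_top.ne
  simp only [finrank_euclideanSpace, Fintype.card_fin, smul_eq_mul]
  rw [mul_comm, ← div_eq_mul_inv]
  apply ENNReal.div_le_of_le_mul
  calc _ ≤ (d : ℝ≥0∞) * (ENNReal.ofReal (3 / 4) * volume (ball (0 : Euc d) 1)) := by gcongr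
    _ = _ := by ring

lemma min_norm_vertex {d : ℕ} {κ : Type} [Fintype κ] (a : κ → Euc d) (β : κ → ℝ)
    (w₀ : Euc d) (h₀ : ∀ i, ⟪w₀, a i⟫ ≤ β i) :
    ∃ w : Euc d, (∀ i, ⟪w, a i⟫ ≤ β i) ∧ ∃ J : Finset κ,
      LinearIndependent ℝ (fun i : J => a i) ∧ (∀ i ∈ J, ⟪w, a i⟫ = β i) ∧
      w ∈ Submodule.span ℝ (Set.range (fun i : J => a i)) := by
  set K : Set (Euc d) := {w | ∀ i, ⟪w, a i⟫ ≤ β i} with hK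
  have hKc : IsClosed K := by
    have : K = ⋂ i, {w | ⟪w, a i⟫ ≤ β i} := by ext; simp [hK]
    rw [this]
    exact isClosed_iInter fun i => isClosed_le (by fun_prop) (by fun_prop)
  obtain ⟨w, hw, hmin⟩ := hKc.exists_infDist_eq_dist ⟨w₀, h₀⟩ 0
  have hmin' : ∀ y ∈ K, ‖w‖ ≤ ‖y‖ := by
    intro y hy
    have := Metric.infDist_le_dist_of_mem (x := (0 : Euc d)) hy
    rw [hmin] at this
    simpa using this
  refine ⟨w, hw, ?_⟩
  set τ := {i : κ // ⟪w, a i⟫ = β i}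
  obtain ⟨J, hJ⟩ : ∃ J : Finset κ, LinearIndependent ℝ (fun i : J => a i) ∧
      (∀ i ∈ J, ⟪w, a i⟫ = β i) ∧ Submodule.span ℝ (Set.range (fun i : J => a i)) =
        Submodule.span ℝ (Set.range (fun i : τ => a i)) := by
    obtain ⟨ι, f, hf, hs, hl⟩ := exists_linearIndependent' ℝ (fun i : τ => a i)
    have : Finite ι := Finite.of_injective _ hf
    have : Fintype ι := Fintype.ofFinite ι
    have hg : Function.Injective (fun i : ι => (f i : κ)) := Subtype.val_injective.comp hf
    let e : ι ≃ (Finset.univ.image (fun i : ι => (f i : κ)) : Finset κ) :=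
      Equiv.ofBijective (fun i => ⟨f i, by simp⟩) ⟨fun x y h => hg (by simpa using h), by
        rintro ⟨x, hx⟩
        obtain ⟨i, -, rfl⟩ := Finset.mem_image.1 hx
        exact ⟨i, rfl⟩⟩
    refine ⟨Finset.univ.image (fun i : ι => (f i : κ)), ?_, ?_, ?_⟩
    · rw [← linearIndependent_equiv e]; exact hl
    · intro i hi
      obtain ⟨j, -, rfl⟩ := Finset.mem_image.1 hi
      exact (f j).2
    · rw [← hs, ← e.surjective.range_comp]; rfl
  refine ⟨J, hJ.1, hJ.2.1, ?_⟩
  rw [hJ.2.2]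
  set U := Submodule.span ℝ (Set.range (fun i : τ => a i))
  set p : Euc d := U.starProjection w with hp
  have hpU : p ∈ U := Submodule.starProjection_apply_mem _ _
  set h := w - p with hh
  have hh_orth : ∀ u ∈ U, ⟪h, u⟫ = 0 := by
    intro u hu
    rw [real_inner_comm]
    exact (Submodule.mem_orthogonal _ _).1 (Submodule.sub_starProjection_mem_orthogonal w) u hu
  by_contra hwU
  have hh0 : h ≠ 0 := by
    intro h0
    apply hwU
    rw [show w = p from sub_eq_zero.1 h0]; exact hpU
  -- find small s
  have hex : ∀ᶠ s in nhdsWithin (0 : ℝ) (Set.Ioi 0), ∀ i, ⟪w - s • h, a i⟫ ≤ β i := by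
    rw [Filter.eventually_all]
    intro i
    by_cases hi : ⟪w, a i⟫ = β i
    · refine Filter.Eventually.of_forall fun s => ?_
      rw [inner_sub_left, inner_smul_left, hh_orth (a i) (Submodule.subset_span ⟨⟨i, hi⟩, rfl⟩), hi]
      simp
    · have hlt : ⟪w, a i⟫ < β i := lt_of_le_of_ne (hw i) hi
      have hcont : Continuous fun s : ℝ => ⟪w - s • h, a i⟫ := by fun_prop
      have := (hcont.tendsto 0).eventually (gt_mem_nhds (show ⟪w - (0 : ℝ) • h, a i⟫ < β i by simpa using hlt))
      exact (this.filter_mono nhdsWithin_le_nhds).mono fun s hs => hs.le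
  have hlt1 : ∀ᶠ s in nhdsWithin (0 : ℝ) (Set.Ioi 0), s < 1 :=
    (gt_mem_nhds one_pos).filter_mono nhdsWithin_le_nhds
  obtain ⟨s, ⟨hs, hs1⟩, hs0⟩ := ((hex.and hlt1).and self_mem_nhdsWithin).exists
  have hs0 : 0 < s := hs0
  have hle := hmin' _ hs
  have hph : ⟪p, h⟫ = 0 := by rw [real_inner_comm]; exact hh_orth p hpU
  have e1 : ‖w‖ ^ 2 = ‖p‖ ^ 2 + ‖h‖ ^ 2 := by
    rw [show w = p + h by rw [hh]; abel, norm_add_sq_real, hph]; ring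
  have e2 : ‖w - s • h‖ ^ 2 = ‖p‖ ^ 2 + (1 - s) ^ 2 * ‖h‖ ^ 2 := by
    rw [show w - s • h = p + (1 - s) • h by rw [sub_smul, one_smul, hh]; abel, norm_add_sq_real,
      inner_smul_right, hph, norm_smul, mul_pow, Real.norm_eq_abs, sq_abs]; ring
  have e3 : ‖w‖ ^ 2 ≤ ‖w - s • h‖ ^ 2 := pow_le_pow_left₀ (norm_nonneg _) hle 2
  have hpos : 0 < ‖h‖ ^ 2 := by have := norm_pos_iff.2 hh0; positivity
  have : (1 - s) ^ 2 < 1 := by nlinarith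
  nlinarith

/-- The point of the span with prescribed inner products. -/
noncomputable def gramSol {d : ℕ} {κ : Type} [Fintype κ] (a : κ → Euc d) (β : κ → ℝ) : Euc d :=
  ∑ i, ((Matrix.gram ℝ a)⁻¹.mulVec β i) • a i

lemma gramSol_eq {d : ℕ} {κ : Type} [Fintype κ] (a : κ → Euc d) (β : κ → ℝ)
    (hl : LinearIndependent ℝ a) (w : Euc d) (hw : w ∈ Submodule.span ℝ (Set.range a))
    (hβ : ∀ i, ⟪w, a i⟫ = β i) : gramSol a β = w := by
  have hdet : IsUnit (Matrix.gram ℝ a).det :=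
    isUnit_iff_ne_zero.2 (Matrix.det_gram_ne_zero_iff_linearIndependent.2 hl)
  have hin : ∀ i, ⟪gramSol a β, a i⟫ = β i := by
    intro i
    have h1 : (Matrix.gram ℝ a).mulVec ((Matrix.gram ℝ a)⁻¹.mulVec β) = β := by
      rw [Matrix.mulVec_mulVec, Matrix.mul_nonsing_inv _ hdet, Matrix.one_mulVec]
    conv_rhs => rw [← h1]
    rw [gramSol, sum_inner]
    simp only [inner_smul_left, RCLike.conj_to_real]
    conv_rhs => simp only [Matrix.mulVec, dotProduct, Matrix.gram_apply]
    refine Finset.sum_congr rfl fun j _ => ?_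
    rw [real_inner_comm, mul_comm]
    rfl
  have hmem : gramSol a β ∈ Submodule.span ℝ (Set.range a) :=
    Submodule.sum_mem _ fun i _ => Submodule.smul_mem _ _ (Submodule.subset_span ⟨i, rfl⟩)
  have hsub : gramSol a β - w ∈ Submodule.span ℝ (Set.range a) := Submodule.sub_mem _ hmem hw
  have horth : ∀ u ∈ Submodule.span ℝ (Set.range a), ⟪gramSol a β - w, u⟫ = 0 := by
    intro u hu
    induction hu using Submodule.span_induction with
    | mem x hx => obtain ⟨i, rfl⟩ := hx; rw [inner_sub_left, hin, hβ, sub_self]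
    | zero => simp
    | add x y _ _ hx hy => rw [inner_add_right, hx, hy, add_zero]
    | smul c x _ hx => rw [inner_smul_right, hx, mul_zero]
  exact sub_eq_zero.1 (inner_self_eq_zero.1 (horth _ hsub))

lemma gramSol_measurable {d : ℕ} {κ : Type} [Fintype κ] (β : κ → ℝ) {Ω : Type} [MeasurableSpace Ω]
    (a : Ω → κ → Euc d) (ha : ∀ i, Measurable fun z => a z i) :
    Measurable fun z => gramSol (a z) β := by
  have hG : Measurable fun z => (fun i j => Matrix.gram ℝ (a z) i j : κ → κ → ℝ) := by
    refine measurable_pi_iff.2 fun i => measurable_pi_iff.2 fun j => ?_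
    exact (ha i).inner (ha j)
  unfold gramSol
  refine Finset.measurable_sum _ fun i _ => Measurable.fun_smul ?_ (ha i)
  simp only [Matrix.mulVec, dotProduct]
  refine Finset.measurable_sum _ fun j _ => Measurable.fun_mul ?_ measurable_const
  have : (fun z => (Matrix.gram ℝ (a z))⁻¹ i j) = fun z =>
      ((Matrix.gram ℝ (a z)).det)⁻¹ * (Matrix.gram ℝ (a z)).adjugate i j := by
    funext z
    rw [Matrix.inv_def, Ring.inverse_eq_inv', Matrix.smul_apply, smul_eq_mul]
  rw [this]
  refine Measurable.fun_mul ?_ ?_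
  · have h1 : Continuous fun M : κ → κ → ℝ => (Matrix.of M).det :=
      Continuous.matrix_det continuous_id
    exact (h1.measurable.comp hG).inv
  · have h1 : Continuous fun M : κ → κ → ℝ => (Matrix.of M).adjugate i j := 
      (Continuous.matrix_adjugate continuous_id).matrix_elem i j
    exact h1.measurable.comp hG

lemma prob_bound {d : ℕ} {ι : Type} [Fintype ι] (ν : Measure (Euc d)) [IsProbabilityMeasure ν]
    (P Q : ι → Prop) (hPQ : ∀ i, Q i → ¬ P i) (g : (ι → Euc d) → Euc d) (hg : Measurable g)
    (hdep : ∀ z z', (∀ i, P i → z i = z' i) → g z = g z') (G : Set (Euc d)) (hG : MeasurableSet G)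
    (p : ℝ≥0∞) (hp : ∀ w ∈ G, ν {x | ⟪w, x⟫ ≤ 1} ≤ p) :
    Measure.pi (fun _ : ι => ν) {z | g z ∈ G ∧ ∀ i, Q i → ⟪g z, z i⟫ ≤ 1} ≤
      p ^ (Finset.univ.filter Q).card := by
  set B : Set (ι → Euc d) := {z | g z ∈ G ∧ ∀ i, Q i → ⟪g z, z i⟫ ≤ 1} with hB
  have hBm : MeasurableSet B := by
    refine MeasurableSet.inter (hg hG) ?_
    have : {z : ι → Euc d | ∀ i, Q i → ⟪g z, z i⟫ ≤ 1} =
        ⋂ i, ⋂ (_ : Q i), {z | ⟪g z, z i⟫ ≤ 1} := by ext; simp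
    change MeasurableSet {z : ι → Euc d | ∀ i, Q i → ⟪g z, z i⟫ ≤ 1}
    rw [this]
    exact MeasurableSet.iInter fun i => MeasurableSet.iInter fun _ =>
      measurableSet_le (hg.inner (measurable_pi_apply i)) measurable_const
  have hmp := (measurePreserving_piEquivPiSubtypeProd (fun _ : ι => ν) P).symm
  rw [← hmp.measure_preimage hBm.nullMeasurableSet]
  rw [Measure.prod_apply (hmp.measurable hBm)]
  set e := (MeasurableEquiv.piEquivPiSubtypeProd (fun _ : ι => Euc d) P).symm with he
  have hsec : ∀ y, (Measure.pi fun i : {i // ¬ P i} => ν) (Prod.mk y ⁻¹' (e ⁻¹' B)) ≤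
      p ^ (Finset.univ.filter Q).card := by
    intro y
    have hW : ∀ y', g (e (y, y')) = g (e (y, 0)) := by
      intro y'
      apply hdep
      intro i hi
      simp [he, MeasurableEquiv.piEquivPiSubtypeProd, hi]
    set w := g (e (y, 0)) with hw
    by_cases hwG : w ∈ G
    swap
    · have : Prod.mk y ⁻¹' (e ⁻¹' B) = ∅ := by
        ext y'
        simp only [mem_preimage, hB, mem_ofPred_eq, hW y', mem_empty_iff_false, iff_false]
        exact fun h => hwG h.1
      rw [this]; simp
    have hsub : Prod.mk y ⁻¹' (e ⁻¹' B) ⊆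
        Set.pi Set.univ (fun i : {i // ¬ P i} => if Q i then {x : Euc d | ⟪w, x⟫ ≤ 1} else Set.univ) := by
      intro y' hy' i _
      simp only [mem_preimage, hB, mem_ofPred_eq, hW y'] at hy'
      by_cases hq : Q i
      · have := hy'.2 i hq
        simp only [hq, if_true, mem_ofPred_eq]
        simpa [he, MeasurableEquiv.piEquivPiSubtypeProd, i.2] using this
      · simp [hq]
    refine (measure_mono hsub).trans ?_
    rw [Measure.pi_pi]
    calc _ ≤ ∏ i : {i // ¬ P i}, (if Q i then p else 1) := by
          refine Finset.prod_le_prod' fun i _ => ?_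
          split_ifs
          · exact hp w hwG
          · simp
      _ = p ^ (Finset.univ.filter (fun i : {i // ¬ P i} => Q i)).card := by
          rw [Finset.prod_ite, Finset.prod_const, Finset.prod_const_one, mul_one]
      _ = _ := by
          congr 1
          refine Finset.card_bij (fun (i : {i // ¬ P i}) _ => (i : ι)) ?_ ?_ ?_
          · intro i hi; simpa using hi
          · intro i _ j _ h; exact Subtype.ext h
          · intro i hi
            have hi : Q i := by simpa using hi
            exact ⟨⟨i, hPQ i hi⟩, by simpa using hi, rfl⟩
  calc _ ≤ ∫⁻ y, p ^ (Finset.univ.filter Q).card ∂(Measure.pi fun i : Subtype P => ν) :=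
        lintegral_mono hsec
    _ = _ := by simp

lemma final_num (d N : ℕ) (hN : 16 * d ≤ N) :
    (∑ J ∈ (Finset.univ : Finset (Finset (Option (Fin N)))).filter (fun J => J.card ≤ d),
      (3 / 4 : ℝ) ^ (N - J.card)) ≤ 2 * Real.exp (-(d : ℝ) / 6) := by
  have h1 : (∑ J ∈ (Finset.univ : Finset (Finset (Option (Fin N)))).filter (fun J => J.card ≤ d),
      (3 / 4 : ℝ) ^ (N - J.card)) ≤
      ∑ J : Finset (Option (Fin N)), (3 / 4 : ℝ) ^ (N - d) * 15 ^ d * (1 / 15) ^ J.card := by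
    refine (Finset.sum_le_sum fun J hJ => ?_).trans
      (Finset.sum_le_sum_of_subset_of_nonneg (Finset.filter_subset _ _) fun J _ _ => by positivity)
    have hJ : J.card ≤ d := by simpa using hJ
    have e1 : (3 / 4 : ℝ) ^ (N - J.card) ≤ (3 / 4) ^ (N - d) :=
      pow_le_pow_of_le_one (by norm_num) (by norm_num) (by omega)
    have e2 : (1 : ℝ) ≤ 15 ^ d * (1 / 15) ^ J.card := by
      rw [one_div, inv_pow, ← div_eq_mul_inv, one_le_div (by positivity)]
      exact pow_le_pow_right₀ (by norm_num) hJ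
    rw [mul_assoc]
    calc (3 / 4 : ℝ) ^ (N - J.card) ≤ (3 / 4) ^ (N - d) * 1 := by rw [mul_one]; exact e1
      _ ≤ _ := by gcongr
  have h2 : ∑ J : Finset (Option (Fin N)), (1 / 15 : ℝ) ^ J.card = (16 / 15) ^ (N + 1) := by
    have := Fintype.sum_pow_mul_eq_add_pow (Option (Fin N)) (1 / 15 : ℝ) 1
    simp only [one_pow, mul_one, Fintype.card_option, Fintype.card_fin] at this
    rw [this]; norm_num
  rw [← Finset.mul_sum, h2] at h1
  refine h1.trans ?_
  obtain ⟨m, rfl⟩ : ∃ m, N = 16 * d + m := ⟨N - 16 * d, by omega⟩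
  have h3 : (3 / 4 : ℝ) ^ (16 * d + m - d) * 15 ^ d * (16 / 15) ^ (16 * d + m + 1) =
      16 / 15 * (4 / 5) ^ m * ((3 / 4) ^ 15 * 15 * (16 / 15) ^ 16) ^ d := by
    rw [show 16 * d + m - d = 15 * d + m by omega, mul_pow, mul_pow, ← pow_mul, ← pow_mul,
      pow_add, pow_add, pow_add, show (4 / 5 : ℝ) = 3 / 4 * (16 / 15) by norm_num, mul_pow]
    ring
  rw [h3]
  have h4 : (4 / 5 : ℝ) ^ m ≤ 1 := pow_le_one₀ (by norm_num) (by norm_num)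
  have h5 : ((3 / 4 : ℝ) ^ 15 * 15 * (16 / 15) ^ 16) ^ d ≤ Real.exp (-(d : ℝ) / 6) := by
    have : Real.exp (-(d : ℝ) / 6) = Real.exp (-1 / 6) ^ d := by
      rw [← Real.exp_nat_mul]; congr 1; ring
    rw [this]
    apply pow_le_pow_left₀ (by norm_num)
    have := Real.add_one_le_exp (-1 / 6 : ℝ)
    refine le_trans ?_ this
    norm_num
  have h6 : (16 / 15 : ℝ) * (4 / 5) ^ m ≤ 2 := by linarith
  have := Real.exp_pos (-(d : ℝ) / 6)
  gcongr

lemma radius_num {d : ℕ} (γ r : ℝ) (hγ : 0 < γ) (hd : 0 < d)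
    (hr : 8 * Real.exp 1 ^ 2 * Real.sqrt (2 * d) / Real.pi ^ ((3 : ℝ) / 2) * γ ≤ r) :
    0 < r ∧ 18 * d * (2 * γ) ^ 2 ≤ r ^ 2 := by
  have hd0 : (0 : ℝ) < d := by exact_mod_cast hd
  have hpi : Real.pi ^ ((3 : ℝ) / 2) ≤ 8 := by
    calc Real.pi ^ ((3 : ℝ) / 2) ≤ 4 ^ ((3 : ℝ) / 2) :=
          Real.rpow_le_rpow Real.pi_pos.le Real.pi_le_four (by norm_num)
      _ = ((2 : ℝ) ^ (2 : ℝ)) ^ ((3 : ℝ) / 2) := by norm_num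
      _ = 8 := by rw [← Real.rpow_mul (by norm_num)]; norm_num
  have hpi0 : 0 < Real.pi ^ ((3 : ℝ) / 2) := Real.rpow_pos_of_pos Real.pi_pos _
  have he : 7 ≤ Real.exp 1 ^ 2 := by nlinarith [Real.exp_one_gt_d9]
  have hs0 : 0 < Real.sqrt (2 * d) := Real.sqrt_pos.2 (by positivity)
  have hs2 : Real.sqrt (2 * d) ^ 2 = 2 * d := Real.sq_sqrt (by positivity)
  have h1 : 7 * Real.sqrt (2 * d) ≤ 8 * Real.exp 1 ^ 2 * Real.sqrt (2 * d) / Real.pi ^ ((3 : ℝ) / 2) := by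
    rw [le_div_iff₀ hpi0]
    calc 7 * Real.sqrt (2 * d) * Real.pi ^ ((3 : ℝ) / 2) ≤ 7 * Real.sqrt (2 * d) * 8 := by gcongr
      _ ≤ _ := by nlinarith
  have h2 : 7 * Real.sqrt (2 * d) * γ ≤ r := (mul_le_mul_of_nonneg_right h1 hγ.le).trans hr
  have h3 : 0 < 7 * Real.sqrt (2 * d) * γ := by positivity
  refine ⟨by linarith, ?_⟩
  have h4 := pow_le_pow_left₀ h3.le h2 2
  rw [mul_pow, mul_pow, hs2] at h4
  nlinarith [mul_pos hd0 (pow_pos hγ 2)]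

/-- constraint vectors -/
noncomputable def cvec {d N : ℕ} (v : Euc d) (z : Fin 2 × Fin N → Euc d) (o : Option (Fin N)) : Euc d :=
  o.elim (-v) (fun j => z (0, j))

/-- constraint bounds -/
noncomputable def cbd {N : ℕ} (o : Option (Fin N)) : ℝ := o.elim (-1) (fun _ => 1)

/-- candidate normal vector -/
noncomputable def cand {d N : ℕ} (v : Euc d) (J : Finset (Option (Fin N)))
    (z : Fin 2 × Fin N → Euc d) : Euc d :=
  gramSol (fun i : J => cvec v z i) (fun i : J => cbd (i : Option (Fin N)))

lemma cand_prob {d N : ℕ} (v : Euc d) (J : Finset (Option (Fin N))) (ν : Measure (Euc d))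
    [IsProbabilityMeasure ν] (G : Set (Euc d)) (hG : MeasurableSet G)
    (hp : ∀ w ∈ G, ν {x | ⟪w, x⟫ ≤ 1} ≤ ENNReal.ofReal (3 / 4)) :
    Measure.pi (fun _ : Fin 2 × Fin N => ν)
      {z | cand v J z ∈ G ∧ ∀ j, ⟪cand v J z, z (0, j)⟫ ≤ 1} ≤
      ENNReal.ofReal ((3 / 4) ^ (N - J.card)) := by
  have h := prob_bound ν (fun i : Fin 2 × Fin N => i.1 = 0 ∧ some i.2 ∈ J)
    (fun i => i.1 = 0 ∧ some i.2 ∉ J) (fun i h h' => h.2 h'.2) (cand v J)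
    (by
      apply gramSol_measurable
      rintro ⟨o, ho⟩
      cases o with
      | none => exact measurable_const
      | some j => exact measurable_pi_apply _)
    (by
      intro z z' hz
      unfold cand
      congr 1
      funext ⟨o, ho⟩
      cases o with
      | none => rfl
      | some j => exact hz (0, j) ⟨rfl, ho⟩) G hG _ hp
  refine (measure_mono ?_).trans (h.trans ?_)
  · rintro z ⟨h1, h2⟩
    refine ⟨h1, ?_⟩
    rintro ⟨i, j⟩ ⟨rfl, -⟩
    exact h2 j
  · rw [← ENNReal.ofReal_pow (by norm_num)]
    apply ENNReal.ofReal_le_ofReal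
    apply pow_le_pow_of_le_one (by norm_num) (by norm_num)
    have h1 := Finset.card_filter_add_card_filter_not (s := (Finset.univ : Finset (Fin N)))
      (fun j => some j ∈ J)
    have h2 : (Finset.univ.filter (fun j : Fin N => some j ∈ J)).card ≤ J.card :=
      Finset.card_le_card_of_injOn some (by intro j hj; simpa using hj)
        (fun a _ b _ h => Option.some_injective _ h)
    have h3 : (Finset.univ.filter (fun j : Fin N => ¬ some j ∈ J)).card ≤
        (Finset.univ.filter (fun i : Fin 2 × Fin N => i.1 = 0 ∧ some i.2 ∉ J)).card :=
      Finset.card_le_card_of_injOn (fun j => ((0 : Fin 2), j)) (by intro j hj; simpa using hj)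
        (fun a _ b _ h => by simpa using h)
    rw [Finset.card_univ, Fintype.card_fin] at h1
    have h4 : N - J.card ≤
        (Finset.univ.filter (fun i : Fin 2 × Fin N => i.1 = 0 ∧ some i.2 ∉ J)).card := by omega
    convert h4

lemma bad_sub {d N : ℕ} (x₁ x₂ : Euc d) (γ : ℝ) (hdist : dist x₁ x₂ = 2 * γ)
    (z : Fin 2 × Fin N → Euc d) (T : Set (Euc d × ℝ)) (h1 : (x₁, (1 : ℝ)) ∈ T)
    (h2 : (x₂, (-1 : ℝ)) ∈ T) (hz : ∀ j, (x₁ + z (0, j), (1 : ℝ)) ∈ T)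
    (hne : respectfulSet ⊤ T ≠ ∅) :
    ∃ J : Finset (Option (Fin N)), J.card ≤ d ∧
      1 ≤ ‖cand (x₂ - x₁) J z‖ * (2 * γ) ∧
      ∀ j, ⟪cand (x₂ - x₁) J z, z (0, j)⟫ ≤ 1 := by
  obtain ⟨f, -, hf1, hf2⟩ := Set.nonempty_iff_ne_empty.2 hne
  have hfx2 : f x₂ = -1 := hf2 (negPts T) subset_rfl le_top x₂ (subset_convexHull ℝ _ h2)
  set F : Set (Euc d) := Set.range (fun o : Option (Fin N) => o.elim x₁ (fun j => x₁ + z (0, j))) with hF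
  have hFT : F ⊆ posPts T := by
    rintro _ ⟨o, rfl⟩
    cases o with
    | none => exact h1
    | some j => exact hz j
  have hx2 : x₂ ∉ convexHull ℝ F := by
    intro h
    have := hf1 F hFT le_top x₂ h
    rw [hfx2] at this; norm_num at this
  obtain ⟨φ, u, hφ, hφ2⟩ := geometric_hahn_banach_closed_point (convex_convexHull ℝ F)
    ((Set.finite_range _).isClosed_convexHull ℝ) hx2
  have hφ1 : φ x₁ < φ x₂ := (hφ x₁ (subset_convexHull ℝ _ ⟨none, rfl⟩)).trans hφ2
  have hφz : ∀ j, φ x₁ + φ (z (0, j)) < φ x₂ := fun j => by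
    rw [← map_add]
    exact (hφ _ (subset_convexHull ℝ _ ⟨some j, rfl⟩)).trans hφ2
  set δ := φ x₂ - φ x₁ with hδ
  have hδ0 : 0 < δ := sub_pos.2 hφ1
  set w₀ : Euc d := δ⁻¹ • (InnerProductSpace.toDual ℝ (Euc d)).symm φ with hw₀
  have hin : ∀ x, ⟪w₀, x⟫ = δ⁻¹ * φ x := by
    intro x
    rw [hw₀, inner_smul_left, InnerProductSpace.toDual_symm_apply]; simp
  obtain ⟨w, hw, J, hJl, hJt, hJs⟩ := min_norm_vertex (cvec (x₂ - x₁) z) cbd w₀ (by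
    intro o
    cases o with
    | none =>
      simp only [cvec, cbd, Option.elim, hin, map_neg, map_sub]
      rw [← hδ]
      field_simp
      exact le_rfl
    | some j =>
      simp only [cvec, cbd, Option.elim, hin]
      rw [inv_mul_le_iff₀ hδ0]
      have := hφz j
      linarith)
  have hc : cand (x₂ - x₁) J z = w :=
    gramSol_eq _ _ hJl w hJs (fun i => hJt i i.2)
  refine ⟨J, ?_, ?_, ?_⟩
  · have := hJl.fintype_card_le_finrank
    simpa using this
  · rw [hc]
    have h3 := hw none
    simp only [cvec, cbd, Option.elim, inner_neg_right] at h3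
    have h4 := real_inner_le_norm w (x₂ - x₁)
    rw [← dist_eq_norm x₂ x₁, dist_comm, hdist] at h4
    linarith
  · intro j
    rw [hc]
    exact hw (some j)

/-- Theorem 20 of the paper: for `S = {(x₁,1),(x₂,-1)}` with
`d(x₁,x₂) = 2γ*`, augmenting each point with `N ≥ 16d` uniform spherical perturbations
of radius `r ≥ (8e²√(2d)/π^{3/2})γ*` makes `R_∞(S ∪ S')` empty with probability at
least `1 - 2e^{-d/6}`. -/
theorem respectful_set_empty_for_large_radius {d : ℕ} (hd : 0 < d)
    (x₁ x₂ : Euc d) (γstar : ℝ) (hγ : 0 < γstar) (hdist : dist x₁ x₂ = 2 * γstar)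
    (N : ℕ) (hN : 16 * d ≤ N) (r : ℝ)
    (hr : 8 * Real.exp 1 ^ 2 * Real.sqrt (2 * d) / Real.pi ^ ((3 : ℝ) / 2) * γstar ≤ r)
    (S : Set (Euc d × ℝ)) (hSdef : S = {(x₁, (1 : ℝ)), (x₂, (-1 : ℝ))})
    (S' : (Fin 2 × Fin N → Euc d) → Set (Euc d × ℝ))
    (hS'def : ∀ z, S' z = Set.range fun p : Fin 2 × Fin N =>
      (![x₁, x₂] p.1 + z p, ![(1 : ℝ), -1] p.1)) :
    ENNReal.ofReal (1 - 2 * Real.exp (-(d : ℝ) / 6)) ≤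
      (Measure.pi fun _ : Fin 2 × Fin N => uniformSphere d r)
        {z | respectfulSet ⊤ (S ∪ S' z) = (∅ : Set (Euc d → ℝ))} := by
  have := uniformSphere_prob hd r
  obtain ⟨hr0, hr2⟩ := radius_num γstar r hγ hd hr
  set μ := Measure.pi fun _ : Fin 2 × Fin N => uniformSphere d r with hμ
  set good := {z : Fin 2 × Fin N → Euc d | respectfulSet ⊤ (S ∪ S' z) = (∅ : Set (Euc d → ℝ))} with hgood
  set G : Set (Euc d) := {w | 18 * d ≤ (r * ‖w‖) ^ 2} with hG
  have hGm : MeasurableSet G :=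
    measurableSet_le (f := fun _ : Euc d => (18 * d : ℝ)) (g := fun w : Euc d => (r * ‖w‖) ^ 2)
      (by fun_prop) (by fun_prop)
  have hbad : goodᶜ ⊆ ⋃ J ∈ (Finset.univ : Finset (Finset (Option (Fin N)))).filter
      (fun J => J.card ≤ d), {z | cand (x₂ - x₁) J z ∈ G ∧ ∀ j, ⟪cand (x₂ - x₁) J z, z (0, j)⟫ ≤ 1} := by
    intro z hz
    obtain ⟨J, hJd, hJn, hJ⟩ := bad_sub x₁ x₂ γstar hdist z (S ∪ S' z)
      (by left; rw [hSdef]; simp) (by left; rw [hSdef]; simp)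
      (by intro j; right; rw [hS'def]; exact ⟨(0, j), by simp⟩) hz
    refine Set.mem_biUnion (x := J) (by simpa using hJd) ⟨?_, hJ⟩
    have h1 : 1 ≤ (‖cand (x₂ - x₁) J z‖ * (2 * γstar)) ^ 2 := one_le_pow₀ hJn
    change 18 * (d : ℝ) ≤ (r * ‖cand (x₂ - x₁) J z‖) ^ 2
    rw [mul_pow] at h1 ⊢
    calc 18 * (d : ℝ) ≤ 18 * d * (‖cand (x₂ - x₁) J z‖ ^ 2 * (2 * γstar) ^ 2) :=
          le_mul_of_one_le_right (by positivity) h1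
      _ = 18 * d * (2 * γstar) ^ 2 * ‖cand (x₂ - x₁) J z‖ ^ 2 := by ring
      _ ≤ _ := by gcongr
  have hμbad : μ goodᶜ ≤ ENNReal.ofReal (2 * Real.exp (-(d : ℝ) / 6)) := by
    refine (measure_mono hbad).trans ((measure_biUnion_finset_le _ _).trans ?_)
    refine (Finset.sum_le_sum fun J _ => cand_prob (x₂ - x₁) J (uniformSphere d r) G hGm
      fun w hw => uniformSphere_half hd r hr0 w hw).trans ?_
    rw [← ENNReal.ofReal_sum_of_nonneg (fun J _ => by positivity)]
    exact ENNReal.ofReal_le_ofReal (final_num d N hN)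
  have htot : (1 : ℝ≥0∞) ≤ μ good + μ goodᶜ := by
    rw [← measure_univ (μ := μ), ← Set.union_compl_self good]
    exact measure_union_le _ _
  rw [ENNReal.ofReal_sub _ (by positivity), ENNReal.ofReal_one]
  exact tsub_le_iff_right.2 (htot.trans (by gcongr))
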